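/- Let n be a positive integer such that the set A_n of nontrivial small divisors of n is in arithmetic progression. Then (writing p, q, r for primes) n is of one of the following forms: n = 1; n = p; n = p^2; n = p^3; n = p^4; n = p^5; n = p^6; n = pq with p < q; n = pq^2 with p < q; n = p^2 q with p < q; n = pqr with p < q < r and 2q = p + r; n = 24; n = 36; or n = 60. -/

import Mathlib

/-- The set of nontrivial small divisors of `n`:
divisors `d` of `n` with `1 < d < √n` (equivalently `d ^ 2 < n`). -/
def A (n : ℕ) : Finset ℕ := n.divisors.filter (fun d => 1 < d ∧ d ^ 2 < n)

/-- A finite set `S` of positive integers is in arithmetic progression if there are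
positive integers `d` (first term) and `a` (common difference) with
`S = {d + i·a : 0 ≤ i ≤ |S| − 1}`. -/
def IsAP (S : Finset ℕ) : Prop :=
  ∃ d a : ℕ, 0 < d ∧ 0 < a ∧ S = (Finset.range S.card).image (fun i => d + i * a)

lemma mem_A {n x : ℕ} (hn : 0 < n) : x ∈ A n ↔ x ∣ n ∧ 1 < x ∧ x ^ 2 < n := by
  unfold A
  simp [Nat.mem_divisors, hn.ne']

lemma mem_A_of {n d e : ℕ} (h : n = d * e) (h1 : 1 < d) (h2 : d < e) : d ∈ A n := by
  have : d ^ 2 < n := by rw [h, sq]; exact Nat.mul_lt_mul_of_pos_left h2 (by omega)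
  exact (mem_A (by omega)).2 ⟨⟨e, h⟩, h1, this⟩

lemma three_mem {S : Finset ℕ} (hS : S.card ≤ 2) {x y z : ℕ} (hx : x ∈ S) (hy : y ∈ S)
    (hz : z ∈ S) (h1 : x ≠ y) (h2 : x ≠ z) (h3 : y ≠ z) : False := by
  have : ({x, y, z} : Finset ℕ) ⊆ S := by
    intro w; simp only [Finset.mem_insert, Finset.mem_singleton]
    rintro (rfl | rfl | rfl) <;> assumption
  have := Finset.card_le_card this
  rw [Finset.card_eq_three.2 ⟨x, y, z, h1, h2, h3, rfl⟩] at this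
  omega

/-- split off the least prime factor -/
lemma split_off (m p : ℕ) (hm : m ≠ 0) (h : ∀ q, q.Prime → q ∣ m → p ≤ q) :
    m = 1 ∨ ∃ q m', q.Prime ∧ p ≤ q ∧ m = q * m' ∧ m' ≠ 0 ∧
      (∀ r, r.Prime → r ∣ m' → q ≤ r) := by
  by_cases h1 : m = 1
  · exact Or.inl h1
  · right
    have hq := Nat.minFac_prime h1
    obtain ⟨m', hm'⟩ := Nat.minFac_dvd m
    refine ⟨m.minFac, m', hq, h _ hq (Nat.minFac_dvd m), hm', ?_, ?_⟩
    · rintro rfl; simp at hm'; exact hm hm'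
    · intro r hr hrm
      exact Nat.minFac_le_of_dvd hr.two_le (hm' ▸ Dvd.dvd.mul_left hrm _)

lemma prime_ne_mul {r p q : ℕ} (hr : r.Prime) (hp : 1 < p) (hq : 1 < q) : r ≠ p * q := by
  rintro rfl
  exact Nat.not_prime_mul (by omega) (by omega) hr

set_option maxHeartbeats 1600000 in
lemma small_case (n : ℕ) (hn : 0 < n) (h : (A n).card ≤ 2) :
    n = 1 ∨
    (∃ p : ℕ, p.Prime ∧
      (n = p ∨ n = p ^ 2 ∨ n = p ^ 3 ∨ n = p ^ 4 ∨ n = p ^ 5 ∨ n = p ^ 6)) ∨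
    (∃ p q : ℕ, p.Prime ∧ q.Prime ∧ p < q ∧
      (n = p * q ∨ n = p * q ^ 2 ∨ n = p ^ 2 * q)) := by
  rcases split_off n 0 hn.ne' (by simp) with h1 | ⟨p, m1, hp, -, e1, hm1, g1⟩
  · exact Or.inl h1
  right
  have p2 := hp.two_le
  rcases split_off m1 p hm1 g1 with h1 | ⟨q, m2, hq, hpq, e2, hm2, g2⟩
  · left; exact ⟨p, hp, by left; simp [e1, h1]⟩
  subst e2
  have q2 := hq.two_le
  rcases split_off m2 q hm2 g2 with h1 | ⟨r, m3, hr, hqr, e3, hm3, g3⟩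
  · subst h1
    rcases hpq.eq_or_lt with rfl | hlt
    · left; exact ⟨p, hp, by right; left; rw [e1]; ring⟩
    · right; exact ⟨p, q, hp, hq, hlt, by left; rw [e1]; ring⟩
  subst e3
  have r2 := hr.two_le
  have hppq : p < p * q := by nlinarith
  have hqpq : q < p * q := by nlinarith
  have hppp : p < p * p := by nlinarith
  rcases split_off m3 r hm3 g3 with h1 | ⟨s, m4, hs, hrs, e4, hm4, g4⟩
  · subst h1
    rcases hpq.eq_or_lt with rfl | hlt
    · rcases hqr.eq_or_lt with rfl | hlt2
      · left; exact ⟨p, hp, by rw [e1]; right; right; left; ring⟩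
      · right; exact ⟨p, r, hp, hr, hlt2, by rw [e1]; right; right; ring⟩
    · rcases hqr.eq_or_lt with rfl | hlt2
      · right; exact ⟨p, q, hp, hq, hlt, by rw [e1]; right; left; ring⟩
      · exfalso
        have a1 : p ∈ A n := mem_A_of e1 (by omega) (by nlinarith)
        have a2 : q ∈ A n := mem_A_of (e := p * r) (by rw [e1]; ring) (by omega) (by nlinarith)
        rcases lt_trichotomy r (p * q) with hc | hc | hc
        · have a3 : r ∈ A n := mem_A_of (e := p * q) (by rw [e1]; ring) (by omega) hc
          exact three_mem h a1 a2 a3 (by omega) (by omega) (by omega)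
        · exact prime_ne_mul hr (by omega) (by omega) hc
        · have a3 : p * q ∈ A n := mem_A_of (e := r) (by rw [e1]; ring) (by omega) hc
          exact three_mem h a1 a2 a3 (by omega) (by omega) (by omega)
  subst e4
  have s2 := hs.two_le
  have m4p : 1 ≤ m4 := by omega
  have hsm : s ≤ s * m4 := by nlinarith
  have hrsm : r * s ≤ r * (s * m4) := Nat.mul_le_mul_left _ hsm
  have hrrs : r < r * s := by nlinarith
  have a1 : p ∈ A n := mem_A_of e1 (by omega) (by nlinarith)
  have key : p * q < r * (s * m4) → q = p := by
    intro hlt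
    by_contra hne
    have a2 : p * q ∈ A n := mem_A_of (e := r * (s * m4)) (by rw [e1]; ring) (by omega) hlt
    have a3 : q ∈ A n := mem_A_of (e := p * (r * (s * m4))) (by rw [e1]; ring) (by omega)
      (by nlinarith)
    exact three_mem h a1 a2 a3 (by omega) (by omega) (by omega)
  have key2 : p * q < r * (s * m4) → r = p := by
    intro hlt
    obtain rfl := key hlt
    by_contra hne
    have a2 : q * q ∈ A n := mem_A_of (e := r * (s * m4)) (by rw [e1]; ring) (by omega) hlt
    have a3 : r ∈ A n := mem_A_of (e := q * q * (s * m4)) (by rw [e1]; ring) (by omega) (by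
      have : r < q * q * s := by nlinarith
      nlinarith)
    exact three_mem h a1 a2 a3 (by omega) (by omega)
      (prime_ne_mul hr (by omega) (by omega)).symm
  rcases split_off m4 s hm4 g4 with h1 | ⟨t, m5, ht, hst, e5, hm5, g5⟩
  · subst h1
    by_cases hps : p = s
    · have : q = p := by omega
      have : r = p := by omega
      subst q r s
      left; exact ⟨p, hp, by rw [e1]; right; right; right; left; ring⟩
    · exfalso
      have hlt : p * q < r * (s * 1) := by
        have : p < s := by omega
        nlinarith
      obtain rfl := key hlt
      obtain rfl := key2 hlt
      have a2 : r * r ∈ A n := mem_A_of (e := r * (s * 1)) (by rw [e1]; ring) (by omega) hlt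
      have hs2 := prime_ne_mul hs (p := r) (q := r) (by omega) (by omega)
      have h3 : r * r < r * (r * r) := by nlinarith
      rcases lt_trichotomy s (r * (r * r)) with hc | hc | hc
      · have a3 : s ∈ A n := mem_A_of (e := r * (r * r)) (by rw [e1]; ring) (by omega) hc
        exact three_mem h a1 a2 a3 (by omega) (by omega) (by omega)
      · exact prime_ne_mul hs (by omega) (by omega) hc
      · have a3 : r * (r * r) ∈ A n := mem_A_of (e := s) (by rw [e1]; ring) (by omega) hc
        exact three_mem h a1 a2 a3 (by omega) (by omega) (by omega)
  subst e5
  have t2 := ht.two_le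
  have m5p : 1 ≤ m5 := by omega
  have htm : t ≤ t * m5 := by nlinarith
  have hlt : p * q < r * (s * (t * m5)) := by
    have : p * q ≤ r * s := Nat.mul_le_mul (by omega) (by omega)
    have : r * s < r * s * (t * m5) := by nlinarith [Nat.mul_pos hr.pos hs.pos]
    nlinarith
  obtain rfl := key hlt
  obtain rfl := key2 hlt
  have a2 : r * r ∈ A n := mem_A_of (e := r * (s * (t * m5))) (by rw [e1]; ring) (by omega) hlt
  have h3 : r * r < r * (r * r) := by nlinarith
  have hrs' : s = r := by
    by_contra hne
    have a3 : s ∈ A n := mem_A_of (e := r * (r * r) * (t * m5)) (by rw [e1]; ring) (by omega) (by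
      have : t * m5 * 1 < t * m5 * (r * (r * r)) :=
        Nat.mul_lt_mul_of_pos_left (by omega) (by omega)
      rw [mul_one, mul_comm (t * m5)] at this
      omega)
    exact three_mem h a1 a2 a3 (by omega) (by omega)
      (prime_ne_mul hs (by omega) (by omega)).symm
  subst hrs'
  rcases split_off m5 t hm5 g5 with h1 | ⟨u, m6, hu, htu, e6, hm6, g6⟩
  · subst h1
    by_cases hps : t = s
    · subst hps
      left; exact ⟨t, hp, by rw [e1]; right; right; right; right; left; ring⟩
    · exfalso
      have ht2 := prime_ne_mul ht (p := s) (q := s) (by omega) (by omega)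
      rcases lt_trichotomy t (s * (s * (s * s))) with hc | hc | hc
      · have a3 : t ∈ A n := mem_A_of (e := s * (s * (s * s))) (by rw [e1]; ring) (by omega) hc
        exact three_mem h a1 a2 a3 (by omega) (by omega) (by omega)
      · exact prime_ne_mul ht (by omega) (by nlinarith) hc
      · have a3 : s * (s * s) ∈ A n := mem_A_of (e := s * t) (by rw [e1]; ring) (by omega)
          (by nlinarith)
        exact three_mem h a1 a2 a3 (by omega) (by omega) (by omega)
  subst e6
  have u2 := hu.two_le
  by_cases hall : t = s ∧ u = s ∧ m6 = 1
  · obtain ⟨rfl, rfl, rfl⟩ := hall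
    left; exact ⟨u, hp, by rw [e1]; right; right; right; right; right; ring⟩
  · exfalso
    have m6p : 1 ≤ m6 := by omega
    have hh : s * s < t * (u * m6) := by
      by_cases hm : m6 = 1
      · subst hm
        have : s < u := by omega
        nlinarith
      · have : s * s ≤ t * u := Nat.mul_le_mul (by omega) (by omega)
        have : t * u < t * u * m6 := by nlinarith [Nat.mul_pos ht.pos hu.pos, show 2 ≤ m6 by omega]
        nlinarith
    have a3 : s * (s * s) ∈ A n := mem_A_of (e := s * (t * (u * m6))) (by rw [e1]; ring) (by omega)
      (Nat.mul_lt_mul_of_pos_left hh (by omega))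
    exact three_mem h a1 a2 a3 (by omega) (by omega) (by omega)

lemma two_case (n k : ℕ) (hk : 3 ≤ k)
    (h : ∀ x, (x ∣ n ∧ 1 < x ∧ x ^ 2 < n) ↔ ∃ i < k, x = 2 + i * 1) :
    n = 24 ∨ n = 36 ∨ n = 60 := by
  have H : ∀ x, 2 ≤ x → x < k + 2 → x ∣ n ∧ x ^ 2 < n := by
    intro x h2 h3
    have := (h x).2 ⟨x - 2, by omega, by omega⟩
    exact ⟨this.1, this.2.2⟩
  have H' : ∀ x, x ∣ n → 1 < x → x ^ 2 < n → x < k + 2 := by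
    intro x h1 h2 h3
    obtain ⟨i, hi, rfl⟩ := (h x).1 ⟨h1, h2, h3⟩
    omega
  have d3 := (H 3 (by omega) (by omega)).1
  have d4 := H 4 (by omega) (by omega)
  by_cases k4 : k = 3
  · subst k4
    have : ¬ (6 ^ 2 < n) := fun hh => by
      have := H' 6 (by omega) (by omega) hh
      omega
    omega
  have d5 := H 5 (by omega) (by omega)
  obtain ⟨m, rfl⟩ : ∃ m, k = m + 1 := ⟨k - 1, by omega⟩
  -- largest element is m + 2, use m+2, m+1, m
  have e1 := (H (m + 2) (by omega) (by omega)).1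
  have e2 := (H (m + 1) (by omega) (by omega)).1
  have e3 := (H m (by omega) (by omega)).1
  have e0 := (H (m + 2) (by omega) (by omega)).2
  have hup : n ≤ (2 * (m + 2)) ^ 2 := by
    by_contra hlt
    push Not at hlt
    have d2 := (H 2 (by omega) (by omega)).1
    rcases Nat.even_or_odd m with hm | hm
    · have hodd : Odd (m + 1) := hm.add_one
      have hd : 2 * (m + 1) ∣ n :=
        Nat.Coprime.mul_dvd_of_dvd_of_dvd (Nat.coprime_two_left.2 hodd) d2 e2
      have := H' _ hd (by omega) (by nlinarith)
      omega
    · have hodd : Odd (m + 2) := by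
        rcases hm with ⟨c, rfl⟩; exact ⟨c + 1, by ring⟩
      have hd : 2 * (m + 2) ∣ n :=
        Nat.Coprime.mul_dvd_of_dvd_of_dvd (Nat.coprime_two_left.2 hodd) d2 e1
      have := H' _ hd (by omega) (by nlinarith)
      omega
  have hlow : (m + 2) * (m + 1) * m ≤ 2 * n := by
    have h12 : (m + 2) * (m + 1) ∣ n := by
      apply Nat.Coprime.mul_dvd_of_dvd_of_dvd _ e1 e2
      simp [Nat.coprime_iff_gcd_eq_one, show m + 2 = m + 1 + 1 from rfl]
    have c1 : Nat.Coprime (m + 1) m := by simp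
    have hg : Nat.gcd ((m + 2) * (m + 1)) m ∣ 2 := by
      rw [Nat.Coprime.gcd_mul_right_cancel _ c1]
      have h1 := Nat.gcd_dvd_left (m + 2) m
      have h2 := Nat.gcd_dvd_right (m + 2) m
      exact (Nat.dvd_add_right h2).1 h1
    have hl : Nat.lcm ((m + 2) * (m + 1)) m ∣ n := Nat.lcm_dvd h12 e3
    have := Nat.gcd_mul_lcm ((m + 2) * (m + 1)) m
    rw [← this]
    exact Nat.mul_le_mul (Nat.le_of_dvd (by norm_num) hg) (Nat.le_of_dvd (by omega) hl)
  have hm : m ≤ 8 := by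
    by_contra hc
    push Not at hc
    have : (m + 2) * ((m + 1) * m) ≤ (m + 2) * (8 * (m + 2)) := by nlinarith
    have := Nat.le_of_mul_le_mul_left this (by omega)
    nlinarith
  have d60 : 60 ∣ n := by omega
  obtain ⟨c, rfl⟩ := d60
  have hc : c ≤ 6 := by
    have : (2 * (m + 2)) ^ 2 ≤ (2 * (8 + 2)) ^ 2 := Nat.pow_le_pow_left (by omega) 2
    omega
  have hc0 : c ≠ 0 := by rintro rfl; omega
  by_cases c1 : c = 1
  · omega
  exfalso
  have m8 := H' 10 (by omega) (by omega) (by omega)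
  have := (H 7 (by omega) (by omega)).1
  omega

lemma three_case (n k : ℕ) (hk : 4 ≤ k)
    (h : ∀ x, (x ∣ n ∧ 1 < x ∧ x ^ 2 < n) ↔ ∃ i < k, x = 3 + i * 2) : False := by
  have H : ∀ i < k, (3 + i * 2) ∣ n ∧ (3 + i * 2) ^ 2 < n := by
    intro i hi
    have := (h (3 + i * 2)).2 ⟨i, hi, rfl⟩
    exact ⟨this.1, this.2.2⟩
  have H' : ∀ x, x ∣ n → 1 < x → x ^ 2 < n → x < 3 + k * 2 := by
    intro x h1 h2 h3
    obtain ⟨i, hi, rfl⟩ := (h x).1 ⟨h1, h2, h3⟩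
    omega
  have d3 := (H 0 (by omega)).1
  have d5 := (H 1 (by omega)).1
  have d7 := (H 2 (by omega)).1
  have d9 := H 3 (by omega)
  norm_num at d3 d5 d7 d9
  have := H' 15 (by omega) (by omega) (by omega)
  obtain ⟨m, rfl⟩ : ∃ m, k = m + 3 := ⟨k - 3, by omega⟩
  have e1 := (H m (by omega)).1
  have e2 := (H (m + 1) (by omega)).1
  have e3 := (H (m + 2) (by omega)).1
  have o1 : Odd (3 + m * 2) := ⟨m + 1, by ring⟩
  set t := 3 + m * 2 with ht
  rw [show 3 + (m + 1) * 2 = t + 2 by omega] at e2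
  rw [show 3 + (m + 2) * 2 = t + 4 by omega] at e3
  have o2 : Odd (t + 2) := by rcases o1 with ⟨c, hc⟩; exact ⟨c + 1, by omega⟩
  have o3 : Odd (t + 4) := by rcases o1 with ⟨c, hc⟩; exact ⟨c + 2, by omega⟩
  have c12 : Nat.Coprime t (t + 2) := by
    simpa using o1
  have c23 : Nat.Coprime (t + 2) (t + 4) := by
    rw [show t + 4 = (t + 2) + 2 from rfl]; simpa using o2
  have c13 : Nat.Coprime t (t + 4) := by
    rw [Nat.coprime_self_add_right]
    exact Nat.Coprime.pow_right 2 (Nat.coprime_two_right.2 o1)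
  have hd : t * (t + 2) * (t + 4) ∣ n :=
    Nat.Coprime.mul_dvd_of_dvd_of_dvd (Nat.Coprime.mul_left c13 c23)
      (Nat.Coprime.mul_dvd_of_dvd_of_dvd c12 e1 e2) e3
  have hle := Nat.le_of_dvd (by omega) hd
  have hup : n ≤ (3 * (t + 4)) ^ 2 := by
    by_contra hlt
    push Not at hlt
    by_cases h3 : 3 ∣ t + 4
    · have h3' : Nat.Coprime 3 (t + 2) := by
        rw [Nat.Prime.coprime_iff_not_dvd Nat.prime_three]; omega
      have := H' _ (Nat.Coprime.mul_dvd_of_dvd_of_dvd h3' d3 e2) (by omega) (by nlinarith)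
      omega
    · have h3' : Nat.Coprime 3 (t + 4) := by
        rw [Nat.Prime.coprime_iff_not_dvd Nat.prime_three]; omega
      have := H' _ (Nat.Coprime.mul_dvd_of_dvd_of_dvd h3' d3 e3) (by omega) (by nlinarith)
      omega
  have : (t + 4) * (t * (t + 2)) ≤ (t + 4) * (9 * (t + 4)) := by nlinarith
  have := Nat.le_of_mul_le_mul_left this (by omega)
  have ht11 : 11 ≤ t := by omega
  nlinarith

lemma big_case (n k p a : ℕ) (hn : 0 < n) (ha : 0 < a) (hk : 3 ≤ k)
    (h : ∀ x, (x ∣ n ∧ 1 < x ∧ x ^ 2 < n) ↔ ∃ i < k, x = p + i * a) :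
    (∃ p q r : ℕ, p.Prime ∧ q.Prime ∧ r.Prime ∧ p < q ∧ q < r ∧
      2 * q = p + r ∧ n = p * q * r) ∨
    n = 24 ∨ n = 36 ∨ n = 60 := by
  have H : ∀ i < k, (p + i * a) ∣ n ∧ 1 < p + i * a ∧ (p + i * a) ^ 2 < n := fun i hi =>
    (h _).2 ⟨i, hi, rfl⟩
  have Hd : ∀ i < k, ∀ d, 1 < d → d ∣ p + i * a → ∃ j < k, d = p + j * a := by
    intro i hi d hd hdi
    obtain ⟨h1, h2, h3⟩ := H i hi
    refine (h d).1 ⟨hdi.trans h1, hd, lt_of_le_of_lt ?_ h3⟩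
    exact Nat.pow_le_pow_left (Nat.le_of_dvd (by omega) hdi) 2
  have Hle : ∀ i < k, ∀ d, 1 < d → d ∣ p + i * a → ∃ j ≤ i, d = p + j * a := by
    intro i hi d hd hdi
    obtain ⟨j, hj, e⟩ := Hd i hi d hd hdi
    refine ⟨j, ?_, e⟩
    have := Nat.le_of_dvd (by have := (H i hi).2.1; omega) hdi
    rw [e] at this
    have : j * a ≤ i * a := by omega
    exact Nat.le_of_mul_le_mul_right this ha
  have hmin : ∀ d, d ∣ n → 1 < d → d < p → False := by
    intro d h1 h2 h3
    have hp := H 0 (by omega)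
    simp only [zero_mul, add_zero] at hp
    obtain ⟨j, hj, e⟩ := (h d).1 ⟨h1, h2, lt_trans (by nlinarith) hp.2.2⟩
    nlinarith [Nat.zero_le (j * a)]
  have hp0 := H 0 (by omega)
  simp only [zero_mul, add_zero] at hp0
  obtain ⟨pdvd, p1, psq⟩ := hp0
  have hp : p.Prime := by
    rw [Nat.prime_def]
    refine ⟨p1, fun d hd => ?_⟩
    by_cases h1 : d = 1
    · exact Or.inl h1
    right
    have d0 : 0 < d := Nat.pos_of_dvd_of_pos hd (by omega)
    have := Nat.le_of_dvd (by omega) hd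
    by_contra hne
    exact hmin d (hd.trans pdvd) (by omega) (by omega)
  -- p does not divide a
  have hpa : ¬ p ∣ a := by
    rintro ⟨c, rfl⟩
    have hc : 0 < c := Nat.pos_of_mul_pos_left ha |> fun _ => by
      rcases Nat.eq_zero_or_pos c with rfl | hc
      · simp at ha
      · exact hc
    obtain ⟨j, hj, e⟩ := Hle 1 (by omega) (1 + c) (by omega) ⟨p, by ring⟩
    obtain ⟨j', hj', e'⟩ := Hle 2 (by omega) (1 + 2 * c) (by omega) ⟨p, by ring⟩
    have hp2 := hp.two_le
    have : c < p * c := by nlinarith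
    interval_cases j
    · have hj2 : 1 + 2 * c = p + c := by omega
      interval_cases j'
      · omega
      · omega
      · omega
    · omega
  have hq : (p + a).Prime := by
    rw [Nat.prime_def]
    refine ⟨by omega, fun d hd => ?_⟩
    by_cases h1 : d = 1
    · exact Or.inl h1
    right
    have d0 : 0 < d := Nat.pos_of_dvd_of_pos hd (by omega)
    obtain ⟨j, hj, e⟩ := Hle 1 (by omega) d (by omega) (by simpa using hd)
    interval_cases j
    · exfalso
      simp only [zero_mul, add_zero] at e
      subst e
      exact hpa ((Nat.dvd_add_right dvd_rfl).1 hd)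
    · simpa using e
  obtain ⟨qdvd, -, qsq⟩ := H 1 (by omega)
  obtain ⟨rdvd, -, rsq⟩ := H 2 (by omega)
  rw [one_mul] at qdvd qsq
  by_cases hkp : p < k
  · right
    obtain ⟨j, hj, e⟩ := Hd p hkp (1 + a) (by omega) ⟨p, by ring⟩
    have hj0 : j = 0 := by
      by_contra hj0
      have : 1 * a ≤ j * a := Nat.mul_le_mul_right _ (by omega)
      omega
    subst hj0
    simp only [zero_mul, add_zero] at e
    subst e
    by_cases ha3 : 3 ≤ a
    · exfalso
      obtain ⟨b, rfl⟩ : ∃ b, a = b + 1 := ⟨a - 1, by omega⟩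
      refine hmin b ?_ (by omega) (by omega)
      refine dvd_trans ?_ (H (b - 2) (by omega)).1
      obtain ⟨c, rfl⟩ : ∃ c, b = c + 2 := ⟨b - 2, by omega⟩
      refine ⟨c + 1 + 1, ?_⟩
      simp only [Nat.add_sub_cancel]
      ring
    · have : a = 1 ∨ a = 2 := by omega
      rcases this with rfl | rfl
      · exact two_case n k hk h
      · exact (three_case n k (by omega) h).elim
  · left
    have hnp : ∀ i < k, i ≠ 0 → ¬ p ∣ p + i * a := by
      intro i hi h0 hd
      have := (Nat.dvd_add_right (dvd_refl p)).1 hd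
      rcases hp.dvd_mul.1 this with h1 | h1
      · have := Nat.le_of_dvd (by omega) h1
        omega
      · exact hpa h1
    have hr : (p + 2 * a).Prime := by
      rw [Nat.prime_def]
      refine ⟨by omega, fun d hd => ?_⟩
      by_cases h1 : d = 1
      · exact Or.inl h1
      right
      have d0 : 0 < d := Nat.pos_of_dvd_of_pos hd (by omega)
      obtain ⟨j, hj, e⟩ := Hle 2 (by omega) d (by omega) hd
      interval_cases j
      · exfalso
        simp only [zero_mul, add_zero] at e
        subst e
        exact hnp 2 (by omega) (by omega) hd
      · exfalso
        rw [one_mul] at e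
        subst e
        have : p + a ∣ a := by
          have h2 : p + 2 * a = (p + a) + a := by ring
          rw [h2] at hd
          exact (Nat.dvd_add_right dvd_rfl).1 hd
        have := Nat.le_of_dvd ha this
        omega
      · exact e
    have cpq : Nat.Coprime p (p + a) := (Nat.coprime_primes hp hq).2 (by omega)
    have cpr : Nat.Coprime p (p + 2 * a) := (Nat.coprime_primes hp hr).2 (by omega)
    have cqr : Nat.Coprime (p + a) (p + 2 * a) := (Nat.coprime_primes hq hr).2 (by omega)
    have hpq : p * (p + a) ∣ n := Nat.Coprime.mul_dvd_of_dvd_of_dvd cpq pdvd qdvd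
    obtain ⟨s, hs⟩ : p * (p + a) * (p + 2 * a) ∣ n :=
      Nat.Coprime.mul_dvd_of_dvd_of_dvd (Nat.Coprime.mul_left cpr cqr) hpq rdvd
    have hnot : n ≤ (p * (p + a)) ^ 2 := by
      by_contra hlt
      push Not at hlt
      obtain ⟨j, hj, e⟩ := (h _).1 ⟨hpq, by nlinarith, hlt⟩
      by_cases hj0 : j = 0
      · subst hj0
        nlinarith
      · exact hnp j hj hj0 (e ▸ Dvd.intro _ rfl)
    have hs1 : s = 1 := by
      have hs0 : s ≠ 0 := by rintro rfl; simp at hs; omega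
      by_contra hne
      have hps : p ≤ s := by
        by_contra hlt
        exact hmin s (Dvd.intro_left _ hs.symm) (by omega) (by omega)
      have hpos : 0 < p * (p + a) := by positivity
      have : p * (p + a) * ((p + 2 * a) * s) ≤ p * (p + a) * (p * (p + a)) := by
        have e1 : p * (p + a) * ((p + 2 * a) * s) = n := by rw [hs, mul_assoc (p * (p + a))]
        rw [e1, ← sq]; exact hnot
      have := Nat.le_of_mul_le_mul_left this hpos
      nlinarith
    subst hs1
    exact ⟨p, p + a, p + 2 * a, hp, hq, hr, by omega, by omega, by ring, by rw [hs, mul_one]⟩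

theorem statement_1 (n : ℕ) (hn : 0 < n) (h : IsAP (A n)) :
    n = 1 ∨
    (∃ p : ℕ, p.Prime ∧
      (n = p ∨ n = p ^ 2 ∨ n = p ^ 3 ∨ n = p ^ 4 ∨ n = p ^ 5 ∨ n = p ^ 6)) ∨
    (∃ p q : ℕ, p.Prime ∧ q.Prime ∧ p < q ∧
      (n = p * q ∨ n = p * q ^ 2 ∨ n = p ^ 2 * q)) ∨
    (∃ p q r : ℕ, p.Prime ∧ q.Prime ∧ r.Prime ∧ p < q ∧ q < r ∧
      2 * q = p + r ∧ n = p * q * r) ∨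
    n = 24 ∨ n = 36 ∨ n = 60 := by
  by_cases hc : (A n).card ≤ 2
  · rcases small_case n hn hc with h1 | h1 | h1
    · exact Or.inl h1
    · exact Or.inr (Or.inl h1)
    · exact Or.inr (Or.inr (Or.inl h1))
  · right; right; right
    obtain ⟨d, a, hd, ha, hS⟩ := h
    refine big_case n (A n).card d a hn ha (by omega) fun x => ?_
    rw [← mem_A hn]
    constructor
    · intro hx
      rw [hS] at hx
      obtain ⟨i, hi, rfl⟩ := Finset.mem_image.1 hx
      exact ⟨i, Finset.mem_range.1 hi, rfl⟩
    · rintro ⟨i, hi, rfl⟩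
      rw [hS]
      exact Finset.mem_image.2 ⟨i, Finset.mem_range.2 hi, rfl⟩
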